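/- Let ε̄ ∈ int(E) and suppose the invariancy set I_inv = {ε ∈ int(E) : π(ε) = π(ε̄)} is bounded. Let Q_N be a matrix whose columns form an orthonormal basis of N(ε̄), and define α_inv = inf and β_inv = sup of the set {ε ∈ ℝ : there exist y ∈ ℝ^m and a symmetric positive definite U_S of size dim N(ε̄) with Σ_i y_i A^i + Q_N U_S Q_N^T = C + ε C̄}. Then α_inv = inf I_inv and β_inv = sup I_inv, i.e., the boundary points of I_inv are obtained by this pair of auxiliary optimization problems. -/

import Mathlib

open Matrix Set

noncomputable section

variable {n m : ℕ}

/-- Feasibility for the primal SDO problem `(P_ε)` (the feasible set does not depend on `ε`). -/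
def PrimalFeasible (A : Fin m → Matrix (Fin n) (Fin n) ℝ) (b : Fin m → ℝ)
    (X : Matrix (Fin n) (Fin n) ℝ) : Prop :=
  X.IsSymm ∧ (∀ i, ((A i) * X).trace = b i) ∧ X.PosSemidef

/-- Feasibility for the dual SDO problem `(D_ε)`. -/
def DualFeasible (C Cbar : Matrix (Fin n) (Fin n) ℝ)
    (A : Fin m → Matrix (Fin n) (Fin n) ℝ) (ε : ℝ)
    (y : Fin m → ℝ) (S : Matrix (Fin n) (Fin n) ℝ) : Prop :=
  S.IsSymm ∧ (∑ i, y i • A i) + S = C + ε • Cbar ∧ S.PosSemidef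

/-- The optimal value function `v(ε)` of `(P_ε)`, with values in `EReal`. -/
def vfun (C Cbar : Matrix (Fin n) (Fin n) ℝ) (A : Fin m → Matrix (Fin n) (Fin n) ℝ)
    (b : Fin m → ℝ) (ε : ℝ) : EReal :=
  sInf ((fun X => (((C + ε • Cbar) * X).trace : EReal)) '' {X | PrimalFeasible A b X})

/-- `E = {ε : v(ε) > -∞}`. -/
def Eset (C Cbar : Matrix (Fin n) (Fin n) ℝ) (A : Fin m → Matrix (Fin n) (Fin n) ℝ)
    (b : Fin m → ℝ) : Set ℝ :=
  {ε | ⊥ < vfun C Cbar A b ε}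

/-- The primal optimal set `P*(ε)`. -/
def PrimalOpt (C Cbar : Matrix (Fin n) (Fin n) ℝ) (A : Fin m → Matrix (Fin n) (Fin n) ℝ)
    (b : Fin m → ℝ) (ε : ℝ) : Set (Matrix (Fin n) (Fin n) ℝ) :=
  {X | PrimalFeasible A b X ∧ ∀ X', PrimalFeasible A b X' →
    ((C + ε • Cbar) * X).trace ≤ ((C + ε • Cbar) * X').trace}

/-- The dual optimal set `D*(ε)`. -/
def DualOpt (C Cbar : Matrix (Fin n) (Fin n) ℝ) (A : Fin m → Matrix (Fin n) (Fin n) ℝ)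
    (b : Fin m → ℝ) (ε : ℝ) : Set ((Fin m → ℝ) × Matrix (Fin n) (Fin n) ℝ) :=
  {p | DualFeasible C Cbar A ε p.1 p.2 ∧ ∀ y' S', DualFeasible C Cbar A ε y' S' →
    ∑ i, b i * y' i ≤ ∑ i, b i * p.1 i}

/-- A maximally complementary optimal solution: `X` lies in the relative interior of `P*(ε)`
and `(y, S)` in the relative interior of `D*(ε)`. -/
def MaxComp (C Cbar : Matrix (Fin n) (Fin n) ℝ) (A : Fin m → Matrix (Fin n) (Fin n) ℝ)
    (b : Fin m → ℝ) (ε : ℝ) (X : Matrix (Fin n) (Fin n) ℝ) (y : Fin m → ℝ)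
    (S : Matrix (Fin n) (Fin n) ℝ) : Prop :=
  X ∈ intrinsicInterior ℝ (PrimalOpt C Cbar A b ε) ∧
    (y, S) ∈ intrinsicInterior ℝ (DualOpt C Cbar A b ε)

/-- `π(ε) = π(ε')`: the optimal partitions at `ε` and `ε'` coincide, expressed through
maximally complementary solutions (`B = range X*`, `N = range S*`, `T` being determined
by `B` and `N`). -/
def SamePartition (C Cbar : Matrix (Fin n) (Fin n) ℝ) (A : Fin m → Matrix (Fin n) (Fin n) ℝ)
    (b : Fin m → ℝ) (ε ε' : ℝ) : Prop :=
  ∃ X y S X' y' S', MaxComp C Cbar A b ε X y S ∧ MaxComp C Cbar A b ε' X' y' S' ∧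
    LinearMap.range X.mulVecLin = LinearMap.range X'.mulVecLin ∧
    LinearMap.range S.mulVecLin = LinearMap.range S'.mulVecLin

/-- The standing assumptions: symmetric data, linearly independent constraint matrices and
the interior point condition at `ε = 0`. -/
def StandingAssumptions (C Cbar : Matrix (Fin n) (Fin n) ℝ)
    (A : Fin m → Matrix (Fin n) (Fin n) ℝ) (b : Fin m → ℝ) : Prop :=
  C.IsSymm ∧ Cbar.IsSymm ∧ (∀ i, (A i).IsSymm) ∧ LinearIndependent ℝ A ∧
    ∃ X y S, PrimalFeasible A b X ∧ X.PosDef ∧ DualFeasible C Cbar A 0 y S ∧ S.PosDef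

/-- The invariancy set of `ε̄`. -/
def InvSet (C Cbar : Matrix (Fin n) (Fin n) ℝ) (A : Fin m → Matrix (Fin n) (Fin n) ℝ)
    (b : Fin m → ℝ) (εbar : ℝ) : Set ℝ :=
  {ε | ε ∈ interior (Eset C Cbar A b) ∧ SamePartition C Cbar A b ε εbar}

/-- `dim B(ε) = dim B(ε')` and `dim N(ε) = dim N(ε')`, expressed through maximally
complementary solutions. -/
def DimsMatch (C Cbar : Matrix (Fin n) (Fin n) ℝ) (A : Fin m → Matrix (Fin n) (Fin n) ℝ)
    (b : Fin m → ℝ) (ε ε' : ℝ) : Prop :=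
  ∀ X y S X' y' S', MaxComp C Cbar A b ε X y S → MaxComp C Cbar A b ε' X' y' S' →
    Module.finrank ℝ (LinearMap.range X.mulVecLin) =
        Module.finrank ℝ (LinearMap.range X'.mulVecLin) ∧
      Module.finrank ℝ (LinearMap.range S.mulVecLin) =
        Module.finrank ℝ (LinearMap.range S'.mulVecLin)

/-- A transition point: a singleton invariancy set such that every neighborhood contains a
parameter at which `dim B` or `dim N` differs. -/
def IsTransitionPoint (C Cbar : Matrix (Fin n) (Fin n) ℝ) (A : Fin m → Matrix (Fin n) (Fin n) ℝ)
    (b : Fin m → ℝ) (εbar : ℝ) : Prop :=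
  εbar ∈ interior (Eset C Cbar A b) ∧
    (∀ ε ∈ interior (Eset C Cbar A b), ε ≠ εbar → ¬ SamePartition C Cbar A b ε εbar) ∧
    ∀ ξ : ℝ, 0 < ξ → ∃ ε ∈ Set.Ioo (εbar - ξ) (εbar + ξ) ∩ interior (Eset C Cbar A b),
      ¬ DimsMatch C Cbar A b ε εbar

/-- Existence of a strictly complementary optimal solution at `ε`. -/
def HasStrictComp (C Cbar : Matrix (Fin n) (Fin n) ℝ) (A : Fin m → Matrix (Fin n) (Fin n) ℝ)
    (b : Fin m → ℝ) (ε : ℝ) : Prop :=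
  ∃ X y S, X ∈ PrimalOpt C Cbar A b ε ∧ (y, S) ∈ DualOpt C Cbar A b ε ∧ (X + S).PosDef

/-- Nonsingularity of the Jacobian `J(X, y, S)` of the optimality system, as a linear map on
`S^n × ℝ^m × S^n`: only the trivial symmetric triple is mapped to zero. -/
def JNonsingular (A : Fin m → Matrix (Fin n) (Fin n) ℝ)
    (X S : Matrix (Fin n) (Fin n) ℝ) : Prop :=
  ∀ (DX DS : Matrix (Fin n) (Fin n) ℝ) (Dy : Fin m → ℝ), DX.IsSymm → DS.IsSymm →
    (∀ i, ((A i) * DX).trace = 0) → ((∑ i, Dy i • A i) + DS = 0) →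
    (DX * S + S * DX + X * DS + DS * X = 0) → DX = 0 ∧ Dy = 0 ∧ DS = 0

/-- Primal nondegeneracy of a primal feasible `X`. -/
def PrimalNondeg (A : Fin m → Matrix (Fin n) (Fin n) ℝ)
    (X : Matrix (Fin n) (Fin n) ℝ) : Prop :=
  ∃ (r : ℕ) (M₁ : Matrix (Fin n) (Fin r) ℝ) (M₂ : Matrix (Fin n) (Fin (n - r)) ℝ),
    M₁ᵀ * M₁ = 1 ∧ M₂ᵀ * M₂ = 1 ∧ M₁ᵀ * M₂ = 0 ∧
    LinearMap.range M₁.mulVecLin = LinearMap.range X.mulVecLin ∧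
    LinearIndependent ℝ (fun i =>
      Matrix.fromBlocks (M₁ᵀ * (A i) * M₁) (M₁ᵀ * (A i) * M₂) (M₂ᵀ * (A i) * M₁) 0)

/-- Dual nondegeneracy of a dual feasible `(y, S)` (the condition involves only `S`). -/
def DualNondeg (A : Fin m → Matrix (Fin n) (Fin n) ℝ)
    (S : Matrix (Fin n) (Fin n) ℝ) : Prop :=
  ∃ (k : ℕ) (N₁ : Matrix (Fin n) (Fin k) ℝ),
    N₁ᵀ * N₁ = 1 ∧ LinearMap.range N₁.mulVecLin = LinearMap.ker S.mulVecLin ∧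
    ∀ W : Matrix (Fin k) (Fin k) ℝ, W.IsSymm →
      W ∈ Submodule.span ℝ (Set.range fun i => N₁ᵀ * (A i) * N₁)

/-- A central solution with parameter `μ` for the problems `(P_ε)` and `(D_ε)`. -/
def CentralSol (C Cbar : Matrix (Fin n) (Fin n) ℝ) (A : Fin m → Matrix (Fin n) (Fin n) ℝ)
    (b : Fin m → ℝ) (ε μ : ℝ) (X : Matrix (Fin n) (Fin n) ℝ) (y : Fin m → ℝ)
    (S : Matrix (Fin n) (Fin n) ℝ) : Prop :=
  PrimalFeasible A b X ∧ DualFeasible C Cbar A ε y S ∧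
    X * S = μ • (1 : Matrix (Fin n) (Fin n) ℝ)

/-- The Frobenius norm of a matrix. -/
def frobNorm {α β : Type*} [Fintype α] [Fintype β] (M : Matrix α β ℝ) : ℝ :=
  Real.sqrt (∑ i, ∑ j, (M i j) ^ 2)

/-- The spectral norm (induced 2-norm) of a square matrix. -/
def specNorm {N : ℕ} (M : Matrix (Fin N) (Fin N) ℝ) : ℝ :=
  ‖LinearMap.toContinuousLinearMap (Matrix.toEuclideanLin M)‖

/-- The smallest eigenvalue of a symmetric matrix, via the Rayleigh quotient. -/
def lamMin {k : ℕ} (M : Matrix (Fin k) (Fin k) ℝ) : ℝ :=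
  sInf {r : ℝ | ∃ x : Fin k → ℝ, (∑ i, (x i) ^ 2) = 1 ∧ r = x ⬝ᵥ M.mulVec x}

/-- `θ^μ`: the operator norm of the inverse of the Jacobian `J(X, y, S)` on
`S^n × ℝ^m × S^n`, characterized as the least constant `t ≥ 0` with
`‖(ΔX, Δy, ΔS)‖ ≤ t * ‖J(X,y,S)(ΔX, Δy, ΔS)‖` for all symmetric `ΔX`, `ΔS`. -/
def thetaMu (A : Fin m → Matrix (Fin n) (Fin n) ℝ)
    (X S : Matrix (Fin n) (Fin n) ℝ) : ℝ :=
  sInf {t : ℝ | 0 ≤ t ∧ ∀ (DX DS : Matrix (Fin n) (Fin n) ℝ) (Dy : Fin m → ℝ),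
    DX.IsSymm → DS.IsSymm →
    Real.sqrt (frobNorm DX ^ 2 + (∑ i, (Dy i) ^ 2) + frobNorm DS ^ 2) ≤
      t * Real.sqrt ((∑ i, (((A i) * DX).trace) ^ 2) +
        frobNorm ((∑ i, Dy i • A i) + DS) ^ 2 +
        frobNorm ((1 / 2 : ℝ) • (DX * S + S * DX + X * DS + DS * X)) ^ 2)}

/-- A nonlinearity interval: a non-singleton open subinterval of `int(E)`, of maximal length,
on which `dim B(·)` and `dim N(·)` are constant while the optimal partition `π(·)` varies. -/
def IsNonlinearityInterval (C Cbar : Matrix (Fin n) (Fin n) ℝ)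
    (A : Fin m → Matrix (Fin n) (Fin n) ℝ) (b : Fin m → ℝ) (I : Set ℝ) : Prop :=
  I ⊆ interior (Eset C Cbar A b) ∧ IsOpen I ∧ I.OrdConnected ∧
    (∃ a ∈ I, ∃ c ∈ I, a ≠ c) ∧
    (∀ ε ∈ I, ∀ ε' ∈ I, DimsMatch C Cbar A b ε ε') ∧
    ¬ (∀ ε ∈ I, ∀ ε' ∈ I, SamePartition C Cbar A b ε ε') ∧
    ∀ I' : Set ℝ, I ⊆ I' → I' ⊆ interior (Eset C Cbar A b) → IsOpen I' → I'.OrdConnected →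
      (∀ ε ∈ I', ∀ ε' ∈ I', DimsMatch C Cbar A b ε ε') → I' = I

end

/-!
Strict primal feasibility gives dual attainment, hence `trace (S * X) = 0` for all primal optimal
`X` and dual optimal `S` at the same parameter. Let `(X, y, S)` be maximally complementary at `ε̄`.
For positive semidefinite matrices `range T ≤ range S` means `t • T ≤ S` for some `t > 0`, so a
dual feasible `T` at `ε` with `range T = range S` is orthogonal to the same positive semidefinite
matrices as `S`, and the primal optimal sets at `ε` and `ε̄` agree. Any other dual optimal `S₁` at
`ε` can be transported back to the dual optimal `S + t • (S₁ - T)` at `ε̄`, so its range is at most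
`range S` by maximality. Hence `ε` lies in the invariancy set iff some dual feasible slack at `ε`
has range `N(ε̄)`, that is, has the form `Q * U * Qᵀ` with `U` positive definite: the two sets
coincide, not only their endpoints.
-/

section Matrices

open scoped ComplexOrder MatrixOrder

variable {l m n R 𝕜 : Type*} [Fintype l] [Fintype m] [Fintype n] [CommSemiring R] [RCLike 𝕜]

omit [Fintype m] in
lemma range_mulVecLin_le_iff_exists_eq_mul {S : Matrix m l R} {T : Matrix m n R} :
    LinearMap.range S.mulVecLin ≤ LinearMap.range T.mulVecLin ↔ ∃ H : Matrix n l R, S = T * H := by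
  classical
  constructor
  · intro h
    choose H hH using fun j => h ⟨Pi.single j 1, rfl⟩
    refine ⟨(of H)ᵀ, ext_col fun j => ?_⟩
    rw [← mulVec_single_one, ← mulVec_single_one, ← mulVec_mulVec, mulVec_single_one (of H)ᵀ]
    exact (hH j).symm
  · rintro ⟨H, rfl⟩
    rw [mulVecLin_mul]
    exact LinearMap.range_comp_le_range _ _

lemma range_mulVecLin_self_mul_conjTranspose (B : Matrix m n 𝕜) :
    LinearMap.range (B * Bᴴ).mulVecLin = LinearMap.range B.mulVecLin :=
  Submodule.eq_of_le_of_finrank_eq (range_mulVecLin_le_iff_exists_eq_mul.2 ⟨Bᴴ, rfl⟩)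
    (rank_self_mul_conjTranspose B)

lemma exists_eq_self_mul_conjTranspose {S : Matrix m m 𝕜} (hS : S.PosSemidef) :
    ∃ B : Matrix m m 𝕜, S = B * Bᴴ := by
  classical
  exact CStarAlgebra.nonneg_iff_eq_mul_star_self.mp hS.nonneg

lemma range_mulVecLin_le_range_mulVecLin_add {S T : Matrix m m 𝕜} (hS : S.PosSemidef)
    (hT : T.PosSemidef) :
    LinearMap.range S.mulVecLin ≤ LinearMap.range (S + T).mulVecLin := by
  classical
  obtain ⟨B, rfl⟩ := exists_eq_self_mul_conjTranspose hS
  obtain ⟨D, rfl⟩ := exists_eq_self_mul_conjTranspose hT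
  have hsum : B * Bᴴ + D * Dᴴ = fromCols B D * (fromCols B D)ᴴ := by
    rw [conjTranspose_fromCols_eq_fromRows_conjTranspose, fromCols_mul_fromRows]
  rw [hsum, range_mulVecLin_self_mul_conjTranspose, range_mulVecLin_self_mul_conjTranspose,
    range_mulVecLin_le_iff_exists_eq_mul]
  exact ⟨fromRows 1 0, by simp [fromCols_mul_fromRows]⟩

omit [Fintype m] in
lemma exists_pos_le_smul_one_of_isHermitian [Finite m] [DecidableEq m] {M : Matrix m m 𝕜}
    (hM : M.IsHermitian) : ∃ r : ℝ, 0 < r ∧ M ≤ r • 1 := by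
  cases nonempty_fintype m
  obtain ⟨r, hr⟩ := (Matrix.finite_real_spectrum (A := M)).bddAbove
  refine ⟨max r 1, by positivity, ?_⟩
  rw [← Algebra.algebraMap_eq_smul_one]
  exact (le_algebraMap_iff_spectrum_le hM).2 fun x hx => (hr hx).trans (le_max_left r 1)

lemma range_mulVecLin_le_iff_exists_smul_le {S T : Matrix m m 𝕜} (hS : S.PosSemidef)
    (hT : T.PosSemidef) :
    LinearMap.range S.mulVecLin ≤ LinearMap.range T.mulVecLin ↔ ∃ t : ℝ, 0 < t ∧ t • S ≤ T := by
  classical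
  constructor
  · intro h
    obtain ⟨B, rfl⟩ := exists_eq_self_mul_conjTranspose hS
    obtain ⟨D, rfl⟩ := exists_eq_self_mul_conjTranspose hT
    rw [range_mulVecLin_self_mul_conjTranspose, range_mulVecLin_self_mul_conjTranspose,
      range_mulVecLin_le_iff_exists_eq_mul] at h
    obtain ⟨H, rfl⟩ := h
    obtain ⟨r, hr, hH⟩ :=
      exists_pos_le_smul_one_of_isHermitian (isHermitian_mul_conjTranspose_self H)
    refine ⟨r⁻¹, inv_pos.2 hr, ?_⟩
    rw [inv_smul_le_iff_of_pos hr]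
    calc D * H * (D * H)ᴴ = D * (H * Hᴴ) * Dᴴ := by
          rw [conjTranspose_mul]; simp only [Matrix.mul_assoc]
      _ ≤ D * (r • 1) * Dᴴ := star_right_conjugate_le_conjugate hH D
      _ = r • (D * Dᴴ) := by rw [mul_smul_comm, smul_mul_assoc, Matrix.mul_one]
  · rintro ⟨t, ht, h⟩
    calc LinearMap.range S.mulVecLin
        ≤ LinearMap.range (t • S).mulVecLin :=
          range_mulVecLin_le_iff_exists_eq_mul.2 ⟨t⁻¹ • 1, by simp [ht.ne']⟩
      _ ≤ LinearMap.range (t • S + (T - t • S)).mulVecLin :=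
          range_mulVecLin_le_range_mulVecLin_add (hS.smul ht.le) h
      _ = LinearMap.range T.mulVecLin := by rw [add_sub_cancel]

omit [Fintype m] in
lemma exists_le_smul_of_posDef [Finite m] {M U : Matrix m m 𝕜} (hM : M.IsHermitian)
    (hU : U.PosDef) : ∃ r : ℝ, M ≤ r • U := by
  classical
  cases nonempty_fintype m
  have hdet : IsUnit U.det := (isUnit_iff_isUnit_det U).1 hU.isUnit
  have hone : LinearMap.range (1 : Matrix m m 𝕜).mulVecLin ≤ LinearMap.range U.mulVecLin :=
    range_mulVecLin_le_iff_exists_eq_mul.2 ⟨U⁻¹, (mul_nonsing_inv U hdet).symm⟩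
  obtain ⟨t, ht, htU⟩ := (range_mulVecLin_le_iff_exists_smul_le PosSemidef.one hU.posSemidef).1 hone
  obtain ⟨r, hr, hrM⟩ := exists_pos_le_smul_one_of_isHermitian hM
  refine ⟨r * t⁻¹, ?_⟩
  calc M ≤ r • 1 := hrM
    _ = (r * t⁻¹) • t • 1 := by rw [smul_smul, inv_mul_cancel_right₀ ht.ne']
    _ ≤ (r * t⁻¹) • U := smul_le_smul_of_nonneg_left htU (by positivity)

lemma trace_mul_nonneg {S X : Matrix m m 𝕜} (hS : S.PosSemidef) (hX : X.PosSemidef) :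
    0 ≤ (S * X).trace := by
  obtain ⟨B, rfl⟩ := exists_eq_self_mul_conjTranspose hX
  rw [← Matrix.mul_assoc, trace_mul_comm, ← Matrix.mul_assoc]
  exact (hS.conjTranspose_mul_mul_same B).trace_nonneg

lemma trace_mul_eq_zero_of_range_mulVecLin_le {S T X : Matrix m m 𝕜} (hS : S.PosSemidef)
    (hT : T.PosSemidef) (h : LinearMap.range S.mulVecLin ≤ LinearMap.range T.mulVecLin)
    (hX : X.PosSemidef) (hTX : (T * X).trace = 0) : (S * X).trace = 0 := by
  obtain ⟨t, ht, hle⟩ := (range_mulVecLin_le_iff_exists_smul_le hS hT).1 h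
  have hnonneg : 0 ≤ ((T - t • S) * X).trace := trace_mul_nonneg hle hX
  rw [Matrix.sub_mul, smul_mul_assoc, trace_sub, trace_smul, hTX, zero_sub,
    Left.nonneg_neg_iff] at hnonneg
  exact le_antisymm (le_of_smul_le_smul_left (by rwa [smul_zero]) ht) (trace_mul_nonneg hS hX)

lemma posSemidef_of_forall_trace_mul_nonneg {S : Matrix m m 𝕜} (hS : S.IsHermitian)
    (h : ∀ X : Matrix m m 𝕜, X.PosSemidef → 0 ≤ (S * X).trace) : S.PosSemidef :=
  .of_dotProduct_mulVec_nonneg hS fun x => by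
    have := h _ (posSemidef_vecMulVec_self_star x)
    rwa [mul_vecMulVec, trace_vecMulVec, dotProduct_comm] at this

lemma posSemidef_and_range_mulVecLin_eq_iff [DecidableEq n] {S : Matrix m m 𝕜} {Q : Matrix m n 𝕜}
    (hQ : Qᴴ * Q = 1) :
    S.PosSemidef ∧ LinearMap.range S.mulVecLin = LinearMap.range Q.mulVecLin ↔
      ∃ U : Matrix n n 𝕜, U.PosDef ∧ S = Q * U * Qᴴ := by
  constructor
  · rintro ⟨hS, hr⟩
    obtain ⟨H, hH⟩ := range_mulVecLin_le_iff_exists_eq_mul.1 hr.le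
    have hQS : Q * Qᴴ * S = S := by
      rw [hH, ← Matrix.mul_assoc, Matrix.mul_assoc Q, hQ, Matrix.mul_one]
    have hSQ : S * (Q * Qᴴ) = S := by
      simpa [conjTranspose_mul, hS.1.eq, Matrix.mul_assoc] using congrArg conjTranspose hQS
    obtain ⟨t, ht, hle⟩ :=
      (range_mulVecLin_le_iff_exists_smul_le (posSemidef_self_mul_conjTranspose Q) hS).1
        ((range_mulVecLin_self_mul_conjTranspose Q).trans hr.symm).le
    have hU : (Qᴴ * S * Q - t • 1).PosSemidef := by
      convert PosSemidef.conjTranspose_mul_mul_same hle Q using 1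
      rw [Matrix.mul_sub, Matrix.sub_mul, Matrix.mul_smul, Matrix.smul_mul, ← Matrix.mul_assoc Qᴴ,
        hQ, Matrix.one_mul, hQ]
    refine ⟨Qᴴ * S * Q, ?_, ?_⟩
    · rw [← sub_add_cancel (Qᴴ * S * Q) (t • 1)]
      exact PosDef.posSemidef_add hU (PosDef.one.smul ht)
    · calc S = Q * Qᴴ * S * (Q * Qᴴ) := by rw [hQS, hSQ]
        _ = Q * (Qᴴ * S * Q) * Qᴴ := by simp only [Matrix.mul_assoc]
  · rintro ⟨U, hU, rfl⟩
    have hdet : IsUnit U.det := (isUnit_iff_isUnit_det U).1 hU.isUnit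
    refine ⟨hU.posSemidef.mul_mul_conjTranspose_same Q, le_antisymm ?_ ?_⟩
    · exact range_mulVecLin_le_iff_exists_eq_mul.2 ⟨U * Qᴴ, Matrix.mul_assoc _ _ _⟩
    · refine range_mulVecLin_le_iff_exists_eq_mul.2 ⟨Q * U⁻¹, ?_⟩
      calc Q = Q * (U * U⁻¹) := by
            rw [mul_nonsing_inv U hdet, Matrix.mul_one]
        _ = Q * (U * (Qᴴ * Q * U⁻¹)) := by rw [hQ, Matrix.one_mul]
        _ = Q * U * Qᴴ * (Q * U⁻¹) := by simp only [Matrix.mul_assoc]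

end Matrices

section ConicOptimization

variable {ι E : Type*} [AddCommGroup E] [Module ℝ E] {K : PointedCone ℝ E} {c : E →ₗ[ℝ] ℝ}
  {a : ι → E →ₗ[ℝ] ℝ} {b : ι → ℝ} {x₀ x : E}

lemma nonneg_of_mem_add_smul_of_optimal (hxK : x ∈ K) (hx : ∀ i, a i x = b i)
    (hopt : ∀ x' ∈ K, (∀ i, a i x' = b i) → c x ≤ c x') {k : E} {t : ℝ} (hk : k ∈ K)
    (hker : ∀ i, a i (k + t • x) = 0) : 0 ≤ c (k + t • x) := by
  have hs : 0 < |t| + 1 := by positivity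
  -- Moving from `x` in the direction `k + t • x` by the step `1 / (|t| + 1)` stays feasible.
  have hmem : (|t| + 1)⁻¹ • (k + (t + (|t| + 1)) • x) ∈ K :=
    K.smul_mem (inv_pos.2 hs).le (K.add_mem hk (K.smul_mem (by linarith [neg_abs_le t]) hxK))
  have hfeas (i : ι) : a i ((|t| + 1)⁻¹ • (k + (t + (|t| + 1)) • x)) = b i := by
    rw [map_smul, add_smul, ← add_assoc, map_add, hker, zero_add, map_smul,
      inv_smul_smul₀ hs.ne', hx]
  have hle := hopt _ hmem hfeas
  rw [map_smul, smul_eq_mul, le_inv_mul_iff₀ hs] at hle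
  simp only [map_add, map_smul, smul_eq_mul] at hle ⊢
  linarith

open Submodule in
lemma exists_lagrange_multipliers [Fintype ι] (hx₀ : ∀ i, a i x₀ = b i)
    (hint : ∀ z, ∃ r : ℝ, r • x₀ + z ∈ K) (hxK : x ∈ K) (hx : ∀ i, a i x = b i)
    (hopt : ∀ x' ∈ K, (∀ i, a i x' = b i) → c x ≤ c x') :
    ∃ y : ι → ℝ, (∀ z ∈ K, 0 ≤ (c - ∑ i, y i • a i) z) ∧ (c - ∑ i, y i • a i) x = 0 := by
  let N : Submodule ℝ E := ⨅ i, LinearMap.ker (a i)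
  have mem_N {z : E} : z ∈ N ↔ ∀ i, a i z = 0 := by simp [N]
  -- Adjoining the line through `x` to the cone forces the extension of `c` to vanish at `x`.
  let K' : PointedCone ℝ E := K ⊔ PointedCone.ofSubmodule (ℝ ∙ x)
  have hxK' (t : ℝ) : t • x ∈ K' :=
    mem_sup_right (PointedCone.mem_ofSubmodule_iff.2 (smul_mem _ t (mem_span_singleton_self x)))
  have hc : ∀ z : N, (z : E) ∈ K' → 0 ≤ c z := by
    rintro ⟨_, hz⟩ hzK
    obtain ⟨k, hk, w, hw, rfl⟩ := mem_sup.1 hzK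
    obtain ⟨t, rfl⟩ := mem_span_singleton.1 hw
    exact nonneg_of_mem_add_smul_of_optimal hxK hx hopt hk (mem_N.1 hz)
  have hdense : ∀ z, ∃ w : N, (w : E) + z ∈ K' := by
    intro z
    obtain ⟨r, hr⟩ := hint z
    refine ⟨⟨r • (x₀ - x), mem_N.2 fun i => by simp [hx₀, hx]⟩, ?_⟩
    have := add_mem (mem_sup_left hr) (hxK' (-r))
    convert this using 1
    module
  obtain ⟨g, hgc, hgK⟩ := riesz_extension K' ⟨N, c.domRestrict N⟩ hc hdense
  have hspan : c - g ∈ span ℝ (range a) :=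
    mem_span_of_iInf_ker_le_ker fun z hz => by
      simpa [sub_eq_zero] using (hgc ⟨z, hz⟩).symm
  obtain ⟨y, hy⟩ := (mem_span_range_iff_exists_fun ℝ).1 hspan
  have hg : c - ∑ i, y i • a i = g := by rw [hy, sub_sub_cancel]
  refine ⟨y, fun z hz => hg ▸ hgK z (mem_sup_left hz), ?_⟩
  have hle := hgK _ (hxK' (-1))
  have hge := hgK _ (hxK' 1)
  rw [map_smul, smul_eq_mul] at hle hge
  rw [hg]
  linarith

end ConicOptimization

lemma exists_pos_add_smul_sub_mem_of_mem_intrinsicInterior {V : Type*} [AddCommGroup V]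
    [Module ℝ V] [TopologicalSpace V] [ContinuousAdd V] [ContinuousSMul ℝ V] {s : Set V} {z w : V}
    (hz : z ∈ intrinsicInterior ℝ s) (hw : w ∈ s) : ∃ t : ℝ, 0 < t ∧ z + t • (z - w) ∈ s := by
  obtain ⟨⟨z, hzs⟩, hi, rfl⟩ := mem_intrinsicInterior.1 hz
  have hline (t : ℝ) : z + t • (z - w) ∈ affineSpan ℝ s := by
    convert AffineMap.lineMap_mem (-t) hzs (subset_affineSpan ℝ s hw) using 1
    rw [AffineMap.lineMap_apply_module]
    module
  let φ (t : ℝ) : affineSpan ℝ s := ⟨z + t • (z - w), hline t⟩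
  have hφ : Continuous φ := by
    refine Continuous.subtype_mk ?_ _
    fun_prop
  have h0 : φ 0 = ⟨z, hzs⟩ := Subtype.ext (by simp [φ])
  have hev : ∀ᶠ t in nhds (0 : ℝ), φ t ∈ ((↑) ⁻¹' s : Set (affineSpan ℝ s)) :=
    hφ.continuousAt.eventually_mem (by rw [h0]; exact mem_interior_iff_mem_nhds.1 hi)
  obtain ⟨t, hts, ht⟩ :=
    ((hev.filter_mono nhdsWithin_le_nhds).and (self_mem_nhdsWithin (s := Ioi (0 : ℝ)))).exists
  exact ⟨t, ht, hts⟩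

lemma mem_interior_of_add_mul_sub_mem {s : Set ℝ} (hs : Convex ℝ s) {x z t : ℝ} (hx : x ∈ s)
    (hzx : z ≠ x) (ht : 0 < t) (h : z + t * (z - x) ∈ s) : z ∈ interior s := by
  have hne : x ≠ z + t * (z - x) := fun heq =>
    mul_ne_zero (by positivity) (sub_ne_zero.2 hzx) (by linarith : (1 + t) * (z - x) = 0)
  have hopen : IsOpen (openSegment ℝ x (z + t * (z - x))) := by
    rw [openSegment_eq_Ioo' hne]
    exact isOpen_Ioo
  refine interior_maximal (hs.openSegment_subset hx h) hopen
    ⟨t / (1 + t), 1 / (1 + t), by positivity, by positivity, by field_simp; ring, ?_⟩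
  simp only [smul_eq_mul]
  field_simp
  ring

section SemidefiniteOptimization

open scoped MatrixOrder

variable {n m : ℕ} {C Cbar : Matrix (Fin n) (Fin n) ℝ} {A : Fin m → Matrix (Fin n) (Fin n) ℝ}
  {b : Fin m → ℝ} {ε ε₀ ε₁ ε₂ εbar : ℝ} {X X₀ Xb S S' S₀ S₁ S₂ Sb : Matrix (Fin n) (Fin n) ℝ}
  {y y' y₀ y₁ y₂ yb : Fin m → ℝ}

lemma DualFeasible.isSymm_cost (hA : ∀ i, (A i).IsSymm) (h : DualFeasible C Cbar A ε y S) :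
    (C + ε • Cbar).IsSymm := by
  rw [← h.2.1]
  exact IsSymm.add (by simp [IsSymm, transpose_sum, fun i => (hA i).eq]) h.1

lemma DualFeasible.trace_cost_mul (h : DualFeasible C Cbar A ε y S) (hX : PrimalFeasible A b X) :
    ((C + ε • Cbar) * X).trace = b ⬝ᵥ y + (S * X).trace := by
  rw [← h.2.1, Matrix.add_mul, trace_add, Matrix.sum_mul, trace_sum]
  simp only [Matrix.smul_mul, trace_smul, hX.2.1, smul_eq_mul, dotProduct, mul_comm]

lemma DualFeasible.mem_Eset (h : DualFeasible C Cbar A ε y S) : ε ∈ Eset C Cbar A b := by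
  refine (EReal.bot_lt_coe (b ⬝ᵥ y)).trans_le (le_sInf ?_)
  rintro _ ⟨X, hX, rfl⟩
  rw [EReal.coe_le_coe_iff, h.trace_cost_mul hX]
  exact le_add_of_nonneg_right (trace_mul_nonneg h.2.2 hX.2.2)

lemma DualFeasible.mem_primalOpt_iff (h₀ : DualFeasible C Cbar A ε y₀ S₀)
    (hX₀ : PrimalFeasible A b X₀) (hcompl : (S₀ * X₀).trace = 0) :
    X ∈ PrimalOpt C Cbar A b ε ↔ PrimalFeasible A b X ∧ (S₀ * X).trace = 0 := by
  refine and_congr_right fun hX => ?_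
  constructor
  · intro hopt
    have := hopt X₀ hX₀
    rw [h₀.trace_cost_mul hX, h₀.trace_cost_mul hX₀, hcompl] at this
    exact le_antisymm (by linarith) (trace_mul_nonneg h₀.2.2 hX.2.2)
  · intro hzero X' hX'
    rw [h₀.trace_cost_mul hX, h₀.trace_cost_mul hX', hzero, add_zero]
    exact le_add_of_nonneg_right (trace_mul_nonneg h₀.2.2 hX'.2.2)

lemma DualFeasible.mem_dualOpt_iff (h₀ : DualFeasible C Cbar A ε y₀ S₀)
    (hX₀ : PrimalFeasible A b X₀) (hcompl : (S₀ * X₀).trace = 0) :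
    (y, S) ∈ DualOpt C Cbar A b ε ↔ DualFeasible C Cbar A ε y S ∧ (S * X₀).trace = 0 := by
  refine and_congr_right fun h => ?_
  have hval := h.trace_cost_mul hX₀
  constructor
  · intro hopt
    have : b ⬝ᵥ y₀ ≤ b ⬝ᵥ y := hopt y₀ S₀ h₀
    rw [h₀.trace_cost_mul hX₀, hcompl] at hval
    exact le_antisymm (by linarith) (trace_mul_nonneg h.2.2 hX₀.2.2)
  · intro hzero y' S' h'
    rw [h'.trace_cost_mul hX₀, hzero, add_zero] at hval
    exact (le_add_of_nonneg_right (trace_mul_nonneg h'.2.2 hX₀.2.2)).trans_eq hval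

/-- The trace pairing `⟨M, X⟩ = trace (M * X)`, linear in the matrix `M` and in the symmetric
matrix `X`. It turns the constraints of the primal problem into linear functionals. Only symmetric
`X` are allowed because among them every positive definite matrix is an order unit. -/
def symmTraceForm (l : Type*) [Fintype l] :
    Matrix l l ℝ →ₗ[ℝ] selfAdjoint.submodule ℝ (Matrix l l ℝ) →ₗ[ℝ] ℝ :=
  ((LinearMap.mul ℝ (Matrix l l ℝ)).compr₂ (traceLinearMap l ℝ ℝ)).compl₂
    (selfAdjoint.submodule ℝ (Matrix l l ℝ)).subtype

lemma exists_dualFeasible_trace_mul_eq_zero (hA : ∀ i, (A i).IsSymm)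
    (hC : (C + ε • Cbar).IsSymm) (hX₀ : PrimalFeasible A b X₀) (hX₀pd : X₀.PosDef)
    (hX : X ∈ PrimalOpt C Cbar A b ε) :
    ∃ y S, DualFeasible C Cbar A ε y S ∧ (S * X).trace = 0 := by
  have apply_eq (M : Matrix (Fin n) (Fin n) ℝ) (Z) :
      symmTraceForm (Fin n) M Z = (M * Z.1).trace := rfl
  obtain ⟨y, hpos, hzero⟩ := exists_lagrange_multipliers
    (K := (PointedCone.positive ℝ (Matrix (Fin n) (Fin n) ℝ)).comap
      (selfAdjoint.submodule ℝ (Matrix (Fin n) (Fin n) ℝ)).subtype)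
    (c := symmTraceForm (Fin n) (C + ε • Cbar)) (a := fun i => symmTraceForm (Fin n) (A i))
    (b := b) (x₀ := ⟨X₀, hX₀.2.2.1⟩) (x := ⟨X, hX.1.2.2.1⟩) hX₀.2.1
    (fun Z => by
      obtain ⟨r, hr⟩ := exists_le_smul_of_posDef (IsHermitian.neg Z.2) hX₀pd
      exact ⟨r, neg_le_iff_add_nonneg.1 hr⟩)
    hX.1.2.2.nonneg hX.1.2.1
    (fun X' hX' hfeas =>
      hX.2 X' ⟨isHermitian_iff_isSymm.1 X'.2, hfeas, nonneg_iff_posSemidef.1 hX'⟩)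
  simp only [← map_smul, ← map_sum, ← map_sub, apply_eq] at hpos hzero
  have hS : (C + ε • Cbar - ∑ i, y i • A i).IsSymm :=
    hC.sub (by simp [IsSymm, transpose_sum, fun i => (hA i).eq])
  refine ⟨y, _, ⟨hS, add_sub_cancel _ _, ?_⟩, hzero⟩
  exact posSemidef_of_forall_trace_mul_nonneg (isHermitian_iff_isSymm.2 hS)
    fun Z hZ => hpos ⟨Z, hZ.1⟩ hZ.nonneg

lemma trace_mul_eq_zero_of_mem_primalOpt_of_mem_dualOpt (hA : ∀ i, (A i).IsSymm)
    (hX₀ : PrimalFeasible A b X₀) (hX₀pd : X₀.PosDef) (hX : X ∈ PrimalOpt C Cbar A b ε)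
    (hS : (y, S) ∈ DualOpt C Cbar A b ε) : (S * X).trace = 0 := by
  obtain ⟨y', S', h', hcompl⟩ :=
    exists_dualFeasible_trace_mul_eq_zero hA (hS.1.isSymm_cost hA) hX₀ hX₀pd hX
  exact ((h'.mem_dualOpt_iff hX.1 hcompl).1 hS).2

lemma DualFeasible.add_smul_sub {t : ℝ} (h₀ : DualFeasible C Cbar A ε₀ y₀ S₀)
    (h₁ : DualFeasible C Cbar A ε₁ y₁ S₁) (h₂ : DualFeasible C Cbar A ε₂ y₂ S₂)
    (hpsd : (S₀ + t • (S₁ - S₂)).PosSemidef) :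
    DualFeasible C Cbar A (ε₀ + t * (ε₁ - ε₂)) (y₀ + t • (y₁ - y₂)) (S₀ + t • (S₁ - S₂)) := by
  refine ⟨isHermitian_iff_isSymm.1 hpsd.1, ?_, hpsd⟩
  have hcost : C + (ε₀ + t * (ε₁ - ε₂)) • Cbar =
      (C + ε₀ • Cbar) + t • ((C + ε₁ • Cbar) - (C + ε₂ • Cbar)) := by module
  rw [hcost, ← h₀.2.1, ← h₁.2.1, ← h₂.2.1]
  simp only [Pi.add_apply, Pi.smul_apply, Pi.sub_apply, smul_eq_mul, add_smul, sub_smul, mul_smul,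
    Finset.sum_add_distrib, Finset.sum_sub_distrib, ← Finset.smul_sum]
  module

lemma convex_setOf_dualFeasible : Convex ℝ
    {p : ℝ × (Fin m → ℝ) × Matrix (Fin n) (Fin n) ℝ | DualFeasible C Cbar A p.1 p.2.1 p.2.2} := by
  refine convex_iff_segment_subset.2 fun p hp q hq => ?_
  rw [segment_eq_image']
  rintro _ ⟨θ, ⟨hθ₀, hθ₁⟩, rfl⟩
  refine DualFeasible.add_smul_sub hp hq hp ?_
  convert (hp.2.2.smul (sub_nonneg.2 hθ₁)).add (hq.2.2.smul hθ₀) using 1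
  module

lemma convex_dualOpt : Convex ℝ (DualOpt C Cbar A b ε) := by
  rintro ⟨y₁, S₁⟩ h₁ ⟨y₂, S₂⟩ h₂ u v hu hv huv
  constructor
  · have := convex_setOf_dualFeasible (x := (ε, y₁, S₁)) h₁.1 (y := (ε, y₂, S₂)) h₂.1 hu hv huv
    simpa [← add_mul, huv] using this
  · intro y S h
    calc b ⬝ᵥ y = u * b ⬝ᵥ y + v * b ⬝ᵥ y := by rw [← add_mul, huv, one_mul]
      _ ≤ u * b ⬝ᵥ y₁ + v * b ⬝ᵥ y₂ := by
        gcongr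
        exacts [h₁.2 y S h, h₂.2 y S h]
      _ = b ⬝ᵥ (u • y₁ + v • y₂) := by simp [dotProduct_add, dotProduct_smul]

lemma nonempty_intrinsicInterior_dualOpt (h : (DualOpt C Cbar A b ε).Nonempty) :
    (intrinsicInterior ℝ (DualOpt C Cbar A b ε)).Nonempty :=
  -- `Matrix` carries no global norm, so the ambient space is spelled as a function space.
  Set.Nonempty.intrinsicInterior (V := (Fin m → ℝ) × (Fin n → Fin n → ℝ)) convex_dualOpt h

lemma range_mulVecLin_le_of_mem_intrinsicInterior_dualOpt
    (h : (y, S) ∈ intrinsicInterior ℝ (DualOpt C Cbar A b ε))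
    (h' : (y', S') ∈ DualOpt C Cbar A b ε) :
    LinearMap.range S'.mulVecLin ≤ LinearMap.range S.mulVecLin := by
  obtain ⟨t, ht, hmem⟩ := exists_pos_add_smul_sub_mem_of_mem_intrinsicInterior h h'
  have hext : 0 ≤ S + t • (S - S') := hmem.1.2.2.nonneg
  refine (range_mulVecLin_le_iff_exists_smul_le h'.1.2.2 (intrinsicInterior_subset h).1.2.2).2
    ⟨t / (1 + t), by positivity, ?_⟩
  rw [div_eq_inv_mul, mul_smul, inv_smul_le_iff_of_pos (by positivity), ← sub_nonneg]
  convert hext using 1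
  module

lemma DualFeasible.mem_interior_Eset (h : DualFeasible C Cbar A ε y S)
    (hb : DualFeasible C Cbar A εbar yb Sb) (hεbar : εbar ∈ interior (Eset C Cbar A b))
    (hrange : LinearMap.range Sb.mulVecLin ≤ LinearMap.range S.mulVecLin) :
    ε ∈ interior (Eset C Cbar A b) := by
  rcases eq_or_ne ε εbar with rfl | hne
  · exact hεbar
  obtain ⟨t, ht, hle⟩ := (range_mulVecLin_le_iff_exists_smul_le hb.2.2 h.2.2).1 hrange
  have hpsd : (S + t • (S - Sb)).PosSemidef := by
    rw [smul_sub, add_sub_left_comm]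
    exact (h.2.2.smul ht.le).add hle
  have hconv : Convex ℝ (Prod.fst '' {p : ℝ × (Fin m → ℝ) × Matrix (Fin n) (Fin n) ℝ |
      DualFeasible C Cbar A p.1 p.2.1 p.2.2}) :=
    convex_setOf_dualFeasible.linear_image (LinearMap.fst ℝ _ _)
  refine interior_mono ?_ (mem_interior_of_add_mul_sub_mem hconv ⟨(εbar, yb, Sb), hb, rfl⟩ hne
    ht ⟨(_, _, _), h.add_smul_sub h hb hpsd, rfl⟩)
  rintro _ ⟨p, hp, rfl⟩
  exact DualFeasible.mem_Eset hp

lemma DualFeasible.range_mulVecLin_le_of_trace_mul_eq_zero (h : DualFeasible C Cbar A ε y S)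
    (h' : DualFeasible C Cbar A ε y' S')
    (hb : (yb, Sb) ∈ intrinsicInterior ℝ (DualOpt C Cbar A b εbar))
    (hX : PrimalFeasible A b X) (hcompl : (Sb * X).trace = 0) (hcompl' : (S' * X).trace = 0)
    (hrange : LinearMap.range S.mulVecLin ≤ LinearMap.range Sb.mulVecLin) :
    LinearMap.range S'.mulVecLin ≤ LinearMap.range Sb.mulVecLin := by
  have hbfeas := (intrinsicInterior_subset hb).1
  have hSX : (S * X).trace = 0 :=
    trace_mul_eq_zero_of_range_mulVecLin_le h.2.2 hbfeas.2.2 hrange hX.2.2 hcompl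
  obtain ⟨t, ht, hle⟩ := (range_mulVecLin_le_iff_exists_smul_le h.2.2 hbfeas.2.2).1 hrange
  have hsum : Sb + t • (S' - S) = t • S' + (Sb - t • S) := by module
  have hpsd : (Sb + t • (S' - S)).PosSemidef := hsum ▸ (h'.2.2.smul ht.le).add hle
  have hfeas : DualFeasible C Cbar A εbar (yb + t • (y' - y)) (Sb + t • (S' - S)) := by
    simpa using hbfeas.add_smul_sub h' h hpsd
  have hopt : (yb + t • (y' - y), Sb + t • (S' - S)) ∈ DualOpt C Cbar A b εbar :=
    (hbfeas.mem_dualOpt_iff hX hcompl).2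
      ⟨hfeas, by simp [add_mul, sub_mul, hcompl, hcompl', hSX]⟩
  refine le_trans ?_ (range_mulVecLin_le_of_mem_intrinsicInterior_dualOpt hb hopt)
  refine (range_mulVecLin_le_iff_exists_smul_le h'.2.2 hpsd).2 ⟨t, ht, ?_⟩
  rw [hsum]
  exact le_add_of_nonneg_right (sub_nonneg.2 hle)

lemma DualFeasible.primalOpt_eq_of_range_mulVecLin_eq (h : DualFeasible C Cbar A ε y S)
    (hb : DualFeasible C Cbar A εbar yb Sb) (hXb : PrimalFeasible A b Xb)
    (hcompl : (Sb * Xb).trace = 0)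
    (hrange : LinearMap.range S.mulVecLin = LinearMap.range Sb.mulVecLin) :
    PrimalOpt C Cbar A b ε = PrimalOpt C Cbar A b εbar := by
  ext X
  rw [h.mem_primalOpt_iff hXb
    (trace_mul_eq_zero_of_range_mulVecLin_le h.2.2 hb.2.2 hrange.le hXb.2.2 hcompl),
    hb.mem_primalOpt_iff hXb hcompl]
  exact and_congr_right fun hX =>
    ⟨trace_mul_eq_zero_of_range_mulVecLin_le hb.2.2 h.2.2 hrange.ge hX.2.2,
      trace_mul_eq_zero_of_range_mulVecLin_le h.2.2 hb.2.2 hrange.le hX.2.2⟩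

lemma MaxComp.range_mulVecLin_eq (h : MaxComp C Cbar A b ε X y S)
    (h' : MaxComp C Cbar A b ε Xb y' S') :
    LinearMap.range S.mulVecLin = LinearMap.range S'.mulVecLin :=
  le_antisymm
    (range_mulVecLin_le_of_mem_intrinsicInterior_dualOpt h'.2 (intrinsicInterior_subset h.2))
    (range_mulVecLin_le_of_mem_intrinsicInterior_dualOpt h.2 (intrinsicInterior_subset h'.2))

lemma samePartition_of_range_mulVecLin_eq (hA : ∀ i, (A i).IsSymm) (hX₀ : PrimalFeasible A b X₀)
    (hX₀pd : X₀.PosDef) (hmc : MaxComp C Cbar A b εbar Xb yb Sb)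
    (h : DualFeasible C Cbar A ε y S)
    (hrange : LinearMap.range S.mulVecLin = LinearMap.range Sb.mulVecLin) :
    SamePartition C Cbar A b ε εbar := by
  have hXb := intrinsicInterior_subset hmc.1
  have hSb := intrinsicInterior_subset hmc.2
  have hcompl : (Sb * Xb).trace = 0 :=
    trace_mul_eq_zero_of_mem_primalOpt_of_mem_dualOpt hA hX₀ hX₀pd hXb hSb
  have hSXb : (S * Xb).trace = 0 :=
    trace_mul_eq_zero_of_range_mulVecLin_le h.2.2 hSb.1.2.2 hrange.le hXb.1.2.2 hcompl
  have hprimal := h.primalOpt_eq_of_range_mulVecLin_eq hSb.1 hXb.1 hcompl hrange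
  have hSopt : (y, S) ∈ DualOpt C Cbar A b ε := (h.mem_dualOpt_iff hXb.1 hSXb).2 ⟨h, hSXb⟩
  obtain ⟨⟨y', S'⟩, hmax⟩ := nonempty_intrinsicInterior_dualOpt ⟨_, hSopt⟩
  obtain ⟨h', hS'Xb⟩ := (h.mem_dualOpt_iff hXb.1 hSXb).1 (intrinsicInterior_subset hmax)
  refine ⟨Xb, y', S', Xb, yb, Sb, ⟨hprimal ▸ hmc.1, hmax⟩, hmc, rfl, le_antisymm ?_ ?_⟩
  · exact h.range_mulVecLin_le_of_trace_mul_eq_zero h' hmc.2 hXb.1 hcompl hS'Xb hrange.le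
  · exact hrange.ge.trans (range_mulVecLin_le_of_mem_intrinsicInterior_dualOpt hmax hSopt)

lemma invSet_eq_setOf_range_mulVecLin_eq (hA : ∀ i, (A i).IsSymm) (hX₀ : PrimalFeasible A b X₀)
    (hX₀pd : X₀.PosDef) (hεbar : εbar ∈ interior (Eset C Cbar A b))
    (hmc : MaxComp C Cbar A b εbar Xb yb Sb) :
    InvSet C Cbar A b εbar = {ε | ∃ y S, DualFeasible C Cbar A ε y S ∧
      LinearMap.range S.mulVecLin = LinearMap.range Sb.mulVecLin} := by
  ext ε
  constructor
  · rintro ⟨-, X, y, S, X', y', S', hX, hX', -, hrange⟩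
    exact ⟨y, S, (intrinsicInterior_subset hX.2).1, hrange.trans (hX'.range_mulVecLin_eq hmc)⟩
  · rintro ⟨y, S, h, hrange⟩
    exact ⟨h.mem_interior_Eset (intrinsicInterior_subset hmc.2).1 hεbar hrange.ge,
      samePartition_of_range_mulVecLin_eq hA hX₀ hX₀pd hmc h hrange⟩

theorem stmt4_general {κ : Type*} [Fintype κ] [DecidableEq κ] {Q : Matrix (Fin n) κ ℝ}
    (hA : ∀ i, (A i).IsSymm) (hX₀ : PrimalFeasible A b X₀) (hX₀pd : X₀.PosDef)
    (hεbar : εbar ∈ interior (Eset C Cbar A b)) (hmc : MaxComp C Cbar A b εbar Xb yb Sb)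
    (hQ : Qᵀ * Q = 1) (hQrange : LinearMap.range Q.mulVecLin = LinearMap.range Sb.mulVecLin) :
    {ε : ℝ | ∃ (y : Fin m → ℝ) (U : Matrix κ κ ℝ), U.PosDef ∧
      (∑ i, y i • A i) + Q * U * Qᵀ = C + ε • Cbar} = InvSet C Cbar A b εbar := by
  simp only [← conjTranspose_eq_transpose_of_trivial] at hQ ⊢
  rw [invSet_eq_setOf_range_mulVecLin_eq hA hX₀ hX₀pd hεbar hmc, ← hQrange]
  ext ε
  refine exists_congr fun y => ?_
  constructor
  · rintro ⟨U, hU, heq⟩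
    obtain ⟨hpsd, hr⟩ := (posSemidef_and_range_mulVecLin_eq_iff hQ).2 ⟨U, hU, rfl⟩
    exact ⟨_, ⟨isHermitian_iff_isSymm.1 hpsd.1, heq, hpsd⟩, hr⟩
  · rintro ⟨S, ⟨-, heq, hpsd⟩, hr⟩
    obtain ⟨U, hU, rfl⟩ := (posSemidef_and_range_mulVecLin_eq_iff hQ).1 ⟨hpsd, hr⟩
    exact ⟨U, hU, heq⟩

end SemidefiniteOptimization

/-- the boundary points of a bounded invariancy set are obtained from the
auxiliary problems `inf`/`sup` of `ε` over the dual auxiliary system. -/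
theorem stmt4 {n m : ℕ} (C Cbar : Matrix (Fin n) (Fin n) ℝ)
    (A : Fin m → Matrix (Fin n) (Fin n) ℝ) (b : Fin m → ℝ)
    (hSA : StandingAssumptions C Cbar A b)
    (εbar : ℝ) (hεbar : εbar ∈ interior (Eset C Cbar A b))
    (Xb Sb : Matrix (Fin n) (Fin n) ℝ) (yb : Fin m → ℝ)
    (hmc : MaxComp C Cbar A b εbar Xb yb Sb)
    (kN : ℕ) (QN : Matrix (Fin n) (Fin kN) ℝ)
    (hQNorth : QNᵀ * QN = 1)
    (hQNrange : LinearMap.range QN.mulVecLin = LinearMap.range Sb.mulVecLin)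
    (hbdd : Bornology.IsBounded (InvSet C Cbar A b εbar)) :
    sInf {ε : ℝ | ∃ (y : Fin m → ℝ) (US : Matrix (Fin kN) (Fin kN) ℝ), US.PosDef ∧
          (∑ i, y i • A i) + QN * US * QNᵀ = C + ε • Cbar} =
        sInf (InvSet C Cbar A b εbar) ∧
      sSup {ε : ℝ | ∃ (y : Fin m → ℝ) (US : Matrix (Fin kN) (Fin kN) ℝ), US.PosDef ∧
          (∑ i, y i • A i) + QN * US * QNᵀ = C + ε • Cbar} =
        sSup (InvSet C Cbar A b εbar) := by
  obtain ⟨-, -, hA, -, X₀, -, -, hX₀, hX₀pd, -, -⟩ := hSA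
  rw [stmt4_general hA hX₀ hX₀pd hεbar hmc hQNorth hQNrange]
  exact ⟨rfl, rfl⟩
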